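/- Smallness of the truncated part of K and kernel bound (Lemma 2.2). Let −3 < γ ≤ 1. There is a constant C, independent of m, such that for every 0 < m ≤ 1 and every g ∈ L∞(ℝ³): |(K^m g)(v)| ≤ C m^{3+γ} e^{−|v|²/6} ‖g‖_{L∞} for all v ∈ ℝ³. Moreover, K^m is an integral operator, K^m f(v) = ∫_{ℝ³} k^m(v,η) f(η) dη, with a kernel k^m satisfying |k^m(v,η)| ≤ C ( |v−η|^γ + |v−η|^{−(3−γ)/2} ) e^{−(|v|² + |η|²)/16}, with C independent of m. -/

import Mathlib

/-!
Write `z = v - u` and let `par z ω = (z·ω) ω`, `perp z ω = z - (z·ω) ω`. The three terms of `K^m`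
evaluate `g` at `v' = v - par z ω`, `u' = v - perp z ω` and `u = v - z`. On the support of the
cutoff `|z| ≤ 2m ≤ 2`, so these points stay within distance `2` of `v`, and each square-root
Maxwellian weight is at most a constant times `e^{-|v|²/4}` (`wt_le`). The bound on `b` gives
`B ≤ C |z|^{γ-1} |z·ω|` (`Bker_le`).

*Smallness.* Since `|z·ω| ≤ |z|`, each term has mass at most
`C e^{-|v|²/4} ∫_{|z| ≤ 2m} |z|^γ dz`, which is a multiple of `m^{3+γ} e^{-|v|²/4}`
(`dens_mass_le`).

*Kernel.* It suffices that the image of the measure `|z|^{γ-1} |z·ω| dz dω` on `|z| ≤ 2` under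
`par` or `perp` has a density at most `C |p|^{-(3-γ)/2}` (`gain_bound`); the loss term has density
`C |z|^γ` directly. By rotation invariance, integrating over `ω` is averaging over `O(3)` with a
fixed direction `e` (`lintegral_sphM`), so only the law of the norm of the component matters
(`sphere_average`). For fixed `e`, split `z` orthogonally as `p + q` along the line `ℝe` and the
plane `e^⊥`. With `t = (γ - 1) / 2 ≤ 0`, the bound `|z| ≥ max(|p|, |q|)` gives
`|z|^{2t} |z·e| ≤ |p|^{1+t} |q|^t` (`W_le`), and Fubini separates the two factors. Both `|p|` and
`|q|` then have law at most `C r^{1+t} dr`: for `p` directly, and for `q` because the plane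
contributes one power of `r`. The other factor has finite integral because `1 + t > -1`. In `ℝ³`
the radial law `r^{1+t} dr` is the density `|p|^{t-1} = |p|^{-(3-γ)/2}`.

Thus the image measure of each term is dominated by an explicit multiple of Lebesgue measure, and
Radon–Nikodym (`exists_density`) yields a kernel with the same bound.
-/

noncomputable section

open MeasureTheory Real Set
open scoped ENNReal RealInnerProductSpace

/-- The velocity/position space `ℝ³`. -/
abbrev V3 : Type := EuclideanSpace ℝ (Fin 3)

/-- The normalized global Maxwellian `μ(v) = (2π)⁻¹ e^{-|v|²/2}`. -/
def gm (v : V3) : ℝ := (2 * π)⁻¹ * Real.exp (-‖v‖ ^ 2 / 2)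

/-- The boundary Maxwellian `μ_θ(v) = (2πθ²)⁻¹ e^{-|v|²/(2θ)}` at temperature `θ`. -/
def gmθ (θ : ℝ) (v : V3) : ℝ := (2 * π * θ ^ 2)⁻¹ * Real.exp (-‖v‖ ^ 2 / (2 * θ))

/-- The velocity weight `w_{q,β}(v) = (1+|v|²)^{β/2} e^{q|v|²}`. -/
def wgt (q β : ℝ) (v : V3) : ℝ := (1 + ‖v‖ ^ 2) ^ (β / 2) * Real.exp (q * ‖v‖ ^ 2)

/-- The unit sphere `S²`. -/
abbrev Sph : Type := Metric.sphere (0 : V3) 1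

/-- The surface measure on the unit sphere. -/
def sphM : Measure Sph := (volume : Measure V3).toSphere

/-- Post-collisional velocity `v' = v - [(v-u)·ω] ω`. -/
def vpost (v u : V3) (ω : Sph) : V3 := v - ⟪v - u, (ω : V3)⟫ • (ω : V3)

/-- Post-collisional velocity `u' = u + [(v-u)·ω] ω`. -/
def upost (v u : V3) (ω : Sph) : V3 := u + ⟪v - u, (ω : V3)⟫ • (ω : V3)

/-- The collision kernel `B(z,ω) = |z|^γ b(cos φ)`, `cos φ = z·ω/|z|`. -/
def Bker (γ : ℝ) (b : ℝ → ℝ) (z : V3) (ω : Sph) : ℝ :=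
  ‖z‖ ^ γ * b (⟪z, (ω : V3)⟫ / ‖z‖)

/-- Admissible angular kernel: measurable with `0 ≤ b(s) ≤ C|s|`. -/
def KernelOK (b : ℝ → ℝ) : Prop :=
  Measurable b ∧ ∃ Cb : ℝ, ∀ s, 0 ≤ b s ∧ b s ≤ Cb * |s|

/-- The Boltzmann collision operator `Q(G,F)`. -/
def Qop (γ : ℝ) (b : ℝ → ℝ) (G F : V3 → ℝ) (v : V3) : ℝ :=
  ∫ u : V3, ∫ ω : Sph,
    Bker γ b (v - u) ω * (G (upost v u ω) * F (vpost v u ω) - G u * F v) ∂sphM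

/-- The collision frequency `ν(v) = ∫∫ B(v-u,ω) μ(u) dω du`. -/
def nufreq (γ : ℝ) (b : ℝ → ℝ) (v : V3) : ℝ :=
  ∫ u : V3, ∫ ω : Sph, Bker γ b (v - u) ω * gm u ∂sphM

/-- The operator `K = K₂ - K₁` with a radial cutoff `χ(|v-u|)` inserted
(`χ ≡ 1` recovers `K` itself). -/
def Kcut (γ : ℝ) (b χ : ℝ → ℝ) (f : V3 → ℝ) (v : V3) : ℝ :=
  ∫ u : V3, ∫ ω : Sph, Bker γ b (v - u) ω * χ ‖v - u‖ *
    (Real.sqrt (gm u * gm (upost v u ω)) * f (vpost v u ω)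
      + Real.sqrt (gm u * gm (vpost v u ω)) * f (upost v u ω)
      - Real.sqrt (gm v * gm u) * f u) ∂sphM

/-- The integral operator `K = K₂ - K₁`. -/
def Kop (γ : ℝ) (b : ℝ → ℝ) (f : V3 → ℝ) : V3 → ℝ := Kcut γ b (fun _ => 1) f

/-- The linearized collision operator `L f = -μ^{-1/2}[Q(μ, √μ f) + Q(√μ f, μ)]`. -/
def Lop (γ : ℝ) (b : ℝ → ℝ) (f : V3 → ℝ) (v : V3) : ℝ :=
  -(Real.sqrt (gm v))⁻¹ *
    (Qop γ b gm (fun u => Real.sqrt (gm u) * f u) v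
      + Qop γ b (fun u => Real.sqrt (gm u) * f u) gm v)

/-- The nonlinear collision term `Γ(f,g) = μ^{-1/2} Q(√μ f, √μ g)`. -/
def Γop (γ : ℝ) (b : ℝ → ℝ) (f g : V3 → ℝ) (v : V3) : ℝ :=
  (Real.sqrt (gm v))⁻¹ *
    Qop γ b (fun u => Real.sqrt (gm u) * f u) (fun u => Real.sqrt (gm u) * g u) v

/-- The collision frequency is comparable to `(1+|v|)^γ`. -/
def NuComparable (γ : ℝ) (b : ℝ → ℝ) : Prop :=
  ∃ c₁ > (0:ℝ), ∃ c₂ > (0:ℝ), ∀ v : V3,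
    c₁ * (1 + ‖v‖) ^ γ ≤ nufreq γ b v ∧ nufreq γ b v ≤ c₂ * (1 + ‖v‖) ^ γ

/-- A bounded connected smooth domain `Ω = {ξ < 0}` in `ℝ³`. -/
structure BDomain where
  ξ : V3 → ℝ
  smooth : ContDiff ℝ (⊤ : ℕ∞) ξ
  grad_ne : ∀ x, ξ x = 0 → gradient ξ x ≠ 0
  bounded : Bornology.IsBounded {x : V3 | ξ x < 0}
  connected : IsConnected {x : V3 | ξ x < 0}

namespace BDomain

/-- The open domain `Ω`. -/
def dom (D : BDomain) : Set V3 := {x | D.ξ x < 0}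

/-- The boundary `∂Ω = {ξ = 0}`. -/
def bdry (D : BDomain) : Set V3 := {x | D.ξ x = 0}

/-- The outward unit normal `n(x) = ∇ξ(x)/|∇ξ(x)|`. -/
def nrm (D : BDomain) (x : V3) : V3 := ‖gradient D.ξ x‖⁻¹ • gradient D.ξ x

/-- Convexity of the domain: `∂²ξ ≥ c_ξ |ζ|²`. -/
def IsConvexDom (D : BDomain) : Prop :=
  ∃ cξ > (0:ℝ), ∀ x : V3, D.ξ x ≤ 0 → ∀ ζ : V3,
    cξ * ‖ζ‖ ^ 2 ≤ iteratedFDeriv ℝ 2 D.ξ x ![ζ, ζ]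

/-- The backward exit time `t_b(x,v)`. -/
def exitT (D : BDomain) (x v : V3) : ℝ :=
  sInf {τ : ℝ | 0 ≤ τ ∧ x - τ • v ∉ closure D.dom}

/-- The grazing set `γ₀ ⊆ ∂Ω × ℝ³`. -/
def grazing (D : BDomain) : Set (V3 × V3) :=
  {p | p.1 ∈ D.bdry ∧ ⟪D.nrm p.1, p.2⟫ = 0}

end BDomain

/-- `L^∞(Ω×ℝ³)` sup (as an extended real). -/
def nInt (D : BDomain) (h : V3 → V3 → ℝ) : ℝ≥0∞ :=
  ⨆ x ∈ D.dom, ⨆ v : V3, ENNReal.ofReal |h x v|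

/-- `L^∞(γ)` sup over the whole phase boundary. -/
def nBdry (D : BDomain) (h : V3 → V3 → ℝ) : ℝ≥0∞ :=
  ⨆ x ∈ D.bdry, ⨆ v : V3, ENNReal.ofReal |h x v|

/-- `L^∞(γ₋)` sup over the incoming phase boundary. -/
def nBdryIn (D : BDomain) (h : V3 → V3 → ℝ) : ℝ≥0∞ :=
  ⨆ x ∈ D.bdry, ⨆ v ∈ {v : V3 | ⟪D.nrm x, v⟫ < 0}, ENNReal.ofReal |h x v|

/-- The diffuse-reflection boundary operator
`P_γ f (x,v) = √μ(v) ∫_{u·n(x)>0} f(u) √μ(u) |u·n(x)| du`. -/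
def Pbd (D : BDomain) (f : V3 → ℝ) (x v : V3) : ℝ :=
  Real.sqrt (gm v) *
    ∫ u in {u : V3 | 0 < ⟪D.nrm x, u⟫}, f u * Real.sqrt (gm u) * |⟪D.nrm x, u⟫|

/-- The diffuse-reflection boundary value at temperature `θv`:
`μ_{θv}(v) ∫_{u·n(x)>0} F(u) |u·n(x)| du`. -/
def diffuseBC (D : BDomain) (θv : ℝ) (F : V3 → ℝ) (x v : V3) : ℝ :=
  gmθ θv v * ∫ u in {u : V3 | 0 < ⟪D.nrm x, u⟫}, F u * |⟪D.nrm x, u⟫|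

/-- Mild solution (for all times `t ∈ ℝ`) of
`∂ₜ f + v·∇ₓ f + σ(v) f = g` with prescribed incoming boundary value `bc`:
the Duhamel integral form along characteristics, backward to the first exit time. -/
def IsMildSol (D : BDomain) (σ : V3 → ℝ) (g bc f : ℝ → V3 → V3 → ℝ) : Prop :=
  (∀ t : ℝ, ∀ x ∈ closure D.dom, ∀ v : V3, v ≠ 0 →
      (x ∈ D.bdry → 0 < ⟪D.nrm x, v⟫) →
      f t x v =
        Real.exp (-σ v * D.exitT x v) *
            bc (t - D.exitT x v) (x - D.exitT x v • v) v
          + ∫ τ in Set.Ioc (t - D.exitT x v) t,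
              Real.exp (-σ v * (t - τ)) * g τ (x - (t - τ) • v) v) ∧
  (∀ t : ℝ, ∀ x ∈ D.bdry, ∀ v : V3, ⟪D.nrm x, v⟫ < 0 → f t x v = bc t x v)

/-- Mild solution on `t ≥ 0` of the initial-boundary value problem
`∂ₜ f + v·∇ₓ f + σ(v) f = g`, `f|_{γ₋} = bc`, `f(0) = f0`. -/
def IsMildSolIVP (D : BDomain) (σ : V3 → ℝ) (g bc : ℝ → V3 → V3 → ℝ)
    (f0 : V3 → V3 → ℝ) (f : ℝ → V3 → V3 → ℝ) : Prop :=
  (∀ t : ℝ, 0 ≤ t → ∀ x ∈ closure D.dom, ∀ v : V3, v ≠ 0 →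
      (x ∈ D.bdry → 0 < ⟪D.nrm x, v⟫) →
      f t x v =
        (if D.exitT x v ≤ t then
            Real.exp (-σ v * D.exitT x v) *
              bc (t - D.exitT x v) (x - D.exitT x v • v) v
          else Real.exp (-σ v * t) * f0 (x - t • v) v)
          + ∫ τ in Set.Ioc (max (t - D.exitT x v) 0) t,
              Real.exp (-σ v * (t - τ)) * g τ (x - (t - τ) • v) v) ∧
  (∀ t : ℝ, 0 ≤ t → ∀ x ∈ D.bdry, ∀ v : V3, ⟪D.nrm x, v⟫ < 0 → f t x v = bc t x v) ∧
  (∀ x ∈ closure D.dom, ∀ v : V3, f 0 x v = f0 x v)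

/-- `L²([0,T]; L²(Ω×ℝ³))` norm (as an extended real). -/
def L2T (D : BDomain) (T : ℝ) (h : ℝ → V3 → V3 → ℝ) : ℝ≥0∞ :=
  (∫⁻ t in Set.Icc (0:ℝ) T, ∫⁻ x in D.dom, ∫⁻ v : V3,
      ENNReal.ofReal (h t x v ^ 2)) ^ (1/2 : ℝ)

/-- A smooth cutoff `χ_m`: `χ ≡ 1` on `[0,m]`, `χ ≡ 0` on `[2m,∞)`, `0 ≤ χ ≤ 1`. -/
def IsCutoff (m : ℝ) (χ : ℝ → ℝ) : Prop :=
  ContDiff ℝ (⊤ : ℕ∞) χ ∧ (∀ s, χ s ∈ Set.Icc (0:ℝ) 1) ∧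
    (∀ s ≤ m, χ s = 1) ∧ ∀ s, 2 * m ≤ s → χ s = 0

/-! ### Rotations of `ℝ³` and averages over the sphere -/

/-- The orthogonal group `O(3)`, realised as the unitary elements of the algebra of continuous
linear maps, which makes it a topological group. -/
abbrev O3 : Type := unitary (V3 →L[ℝ] V3)

instance : MeasurableSpace O3 := borel _
instance : BorelSpace O3 := ⟨rfl⟩

instance : ContinuousStar (V3 →L[ℝ] V3) := ⟨ContinuousLinearMap.adjoint.continuous⟩

instance : CompactSpace O3 := by
  have : ProperSpace (V3 →L[ℝ] V3) := FiniteDimensional.proper ℝ _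
  have hc : IsClosed ((unitary (V3 →L[ℝ] V3) : Set (V3 →L[ℝ] V3))) := by
    have : (unitary (V3 →L[ℝ] V3) : Set (V3 →L[ℝ] V3)) =
        {x | star x * x = 1} ∩ {x | x * star x = 1} := by
      ext x; simp [Unitary.mem_iff]
    rw [this]
    exact (isClosed_eq (by fun_prop) (by fun_prop)).inter
      (isClosed_eq (by fun_prop) (by fun_prop))
  have hb : Bornology.IsBounded ((unitary (V3 →L[ℝ] V3) : Set (V3 →L[ℝ] V3))) := by
    refine (Metric.isBounded_closedBall (x := (0 : V3 →L[ℝ] V3)) (r := 1)).subset ?_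
    intro x hx
    rw [mem_closedBall_zero_iff]
    exact CStarRing.norm_of_mem_unitary hx |>.le
  exact isCompact_iff_compactSpace.mp (Metric.isCompact_of_isClosed_isBounded hc hb)

instance : SecondCountableTopology O3 := by
  have : ProperSpace (V3 →L[ℝ] V3) := FiniteDimensional.proper ℝ _
  infer_instance

/-- The linear isometry given by an element of `O(3)`. -/
def O3.iso (R : O3) : V3 ≃ₗᵢ[ℝ] V3 := Unitary.linearIsometryEquiv R

lemma O3.iso_mul (R S : O3) (x : V3) : (R * S).iso x = R.iso (S.iso x) := by
  simp [O3.iso]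

lemma O3.continuous_iso : Continuous fun p : O3 × V3 => p.1.iso p.2 := by
  have : (fun p : O3 × V3 => p.1.iso p.2) = fun p => (p.1 : V3 →L[ℝ] V3) p.2 := rfl
  rw [this]
  fun_prop

/-- `O(3)` acts transitively on spheres; the isometry is a reflection. -/
lemma O3.exists_iso {x y : V3} (h : ‖x‖ = ‖y‖) : ∃ R : O3, R.iso x = y := by
  refine ⟨Unitary.linearIsometryEquiv.symm ((ℝ ∙ (x - y))ᗮ.reflection), ?_⟩
  simp only [O3.iso, MulEquiv.apply_symm_apply]
  exact Submodule.reflection_sub h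

/-- The right-invariant Haar probability measure on `O(3)`. -/
def haarO3 : Measure O3 := (Measure.haarMeasure (⊤ : TopologicalSpace.PositiveCompacts O3)).inv

instance : Measure.IsMulRightInvariant haarO3 := by unfold haarO3; infer_instance
instance : IsProbabilityMeasure haarO3 := by
  constructor
  rw [haarO3, Measure.inv_apply]
  simpa using Measure.haarMeasure_self (K₀ := (⊤ : TopologicalSpace.PositiveCompacts O3))

/-- The average of `G` over the orbit of `x` under rotations. -/
def rotAvg (G : V3 → ℝ≥0∞) (x : V3) : ℝ≥0∞ := ∫⁻ R, G (R.iso x) ∂haarO3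

lemma rotAvg_eq (G : V3 → ℝ≥0∞) {x y : V3} (h : ‖x‖ = ‖y‖) : rotAvg G x = rotAvg G y := by
  obtain ⟨S, rfl⟩ := O3.exists_iso h
  unfold rotAvg
  simp_rw [← O3.iso_mul]
  exact (lintegral_mul_right_eq_self (fun R : O3 => G (R.iso x)) S).symm

/-- The image of a point of the unit sphere under a linear isometry. -/
def rotS (L : V3 ≃ₗᵢ[ℝ] V3) (ω : Sph) : Sph := ⟨L ω, by simp⟩

open scoped Pointwise in
lemma measurePreserving_rotS (L : V3 ≃ₗᵢ[ℝ] V3) : MeasurePreserving (rotS L) sphM sphM := by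
  have hc : Continuous (rotS L) := by unfold rotS; fun_prop
  refine ⟨hc.measurable, ?_⟩
  ext s hs
  rw [Measure.map_apply hc.measurable hs, sphM, Measure.toSphere_apply' _ hs,
    Measure.toSphere_apply' _ (hc.measurable hs)]
  congr 1
  refine Eq.trans ?_ (L.measurePreserving.measure_preimage_equiv
    (f := L.toHomeomorph.toMeasurableEquiv) _)
  congr 1
  ext x
  change _ ↔ L x ∈ Ioo (0 : ℝ) 1 • (Subtype.val '' s)
  simp only [mem_preimage, Set.mem_smul, Set.mem_image]
  constructor
  · rintro ⟨r, hr, _, ⟨ω, hω, rfl⟩, rfl⟩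
    exact ⟨r, hr, _, ⟨_, hω, rfl⟩, by simp [rotS]⟩
  · rintro ⟨r, hr, _, ⟨ω, hω, rfl⟩, h⟩
    refine ⟨r, hr, _, ⟨rotS L.symm ω, ?_, rfl⟩, ?_⟩
    · simpa [rotS] using hω
    · apply L.injective
      simpa [rotS] using h

instance : IsFiniteMeasure sphM := by unfold sphM; infer_instance

lemma lintegral_rot (L : V3 ≃ₗᵢ[ℝ] V3) (f : V3 → ℝ≥0∞) : ∫⁻ x, f (L x) = ∫⁻ x, f x :=
  L.measurePreserving.lintegral_comp_emb L.toHomeomorph.measurableEmbedding f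

/-- Integration over the sphere is averaging over rotations of a fixed unit vector. -/
lemma lintegral_sphM (f : V3 → ℝ≥0∞) (hf : Measurable f) {e : V3} (he : ‖e‖ = 1) :
    ∫⁻ ω : Sph, f ω ∂sphM = sphM univ * ∫⁻ R, f (R.iso e) ∂haarO3 := by
  have h1 : ∀ R : O3, ∫⁻ ω : Sph, f (R.iso ω) ∂sphM = ∫⁻ ω : Sph, f ω ∂sphM := fun R =>
    (measurePreserving_rotS R.iso).lintegral_comp (f := fun ω : Sph => f ω) (by fun_prop)
  have hm : Measurable fun p : O3 × Sph => f (p.1.iso p.2) :=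
    hf.comp (O3.continuous_iso.comp (by fun_prop : Continuous fun p : O3 × Sph =>
      ((p.1, (p.2 : V3)) : O3 × V3))).measurable
  calc ∫⁻ ω : Sph, f ω ∂sphM = ∫⁻ _R : O3, ∫⁻ ω : Sph, f ω ∂sphM ∂haarO3 := by simp
    _ = ∫⁻ R : O3, ∫⁻ ω : Sph, f (R.iso ω) ∂sphM ∂haarO3 := by simp_rw [h1]
    _ = ∫⁻ ω : Sph, ∫⁻ R : O3, f (R.iso ω) ∂haarO3 ∂sphM :=
        lintegral_lintegral_swap hm.aemeasurable
    _ = ∫⁻ _ω : Sph, rotAvg f e ∂sphM :=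
        lintegral_congr fun ω => rotAvg_eq f (by simp [he])
    _ = _ := by simp [rotAvg, mul_comm]

/-- A radially weighted integral only sees the rotational average. -/
lemma lintegral_radial_rotAvg (w : ℝ → ℝ≥0∞) (hw : Measurable w) (G : V3 → ℝ≥0∞)
    (hG : Measurable G) : ∫⁻ x : V3, w ‖x‖ * G x = ∫⁻ x : V3, w ‖x‖ * rotAvg G x := by
  have hm : Measurable fun p : O3 × V3 => G (p.1.iso p.2) :=
    hG.comp O3.continuous_iso.measurable
  calc ∫⁻ x : V3, w ‖x‖ * G x = ∫⁻ _R : O3, (∫⁻ x : V3, w ‖x‖ * G x) ∂haarO3 := by simp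
    _ = ∫⁻ R : O3, (∫⁻ x : V3, w ‖x‖ * G (R.iso x)) ∂haarO3 := by
        refine lintegral_congr fun R => ?_
        rw [← lintegral_rot R.iso]
        simp
    _ = ∫⁻ x : V3, (∫⁻ R : O3, w ‖x‖ * G (R.iso x) ∂haarO3) :=
        lintegral_lintegral_swap
          ((hw.comp (by fun_prop : Measurable fun p : O3 × V3 => ‖p.2‖)).mul hm).aemeasurable
    _ = _ := by
        refine lintegral_congr fun x => ?_
        exact lintegral_const_mul _ (hm.comp (by fun_prop : Measurable fun R : O3 => (R, x)))

/-! ### Polar coordinates and orthogonal splitting -/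

/-- Polar coordinates for the Lebesgue integral of a radial function. -/
lemma lintegral_radial {E : Type*} [NormedAddCommGroup E] [InnerProductSpace ℝ E]
    [FiniteDimensional ℝ E] [MeasurableSpace E] [BorelSpace E] [Nontrivial E]
    (f : ℝ → ℝ≥0∞) (hf : Measurable f) :
    ∫⁻ x : E, f ‖x‖ = (volume : Measure E).toSphere univ *
      ∫⁻ r in Ioi (0 : ℝ), ENNReal.ofReal (r ^ (Module.finrank ℝ E - 1)) * f r := by
  calc ∫⁻ x : E, f ‖x‖ = ∫⁻ x : ({(0 : E)}ᶜ : Set E), f ‖x.1‖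
        ∂((volume : Measure E).comap (↑)) := by
        rw [lintegral_subtype_comap (measurableSet_singleton _).compl fun x => f ‖x‖,
          restrict_compl_singleton]
    _ = ∫⁻ p : (Metric.sphere (0 : E) 1) × Ioi (0 : ℝ), f p.2
        ∂((volume : Measure E).toSphere.prod (Measure.volumeIoiPow (Module.finrank ℝ E - 1))) := by
        rw [← (volume : Measure E).measurePreserving_homeomorphUnitSphereProd.lintegral_comp_emb
          (Homeomorph.measurableEmbedding _)]
        simp
    _ = (volume : Measure E).toSphere univ *
          ∫⁻ r : Ioi (0 : ℝ), f r ∂(Measure.volumeIoiPow (Module.finrank ℝ E - 1)) := by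
        rw [lintegral_prod _ (by fun_prop)]
        simp [mul_comm]
    _ = _ := by
        rw [Measure.volumeIoiPow, lintegral_withDensity_eq_lintegral_mul _ (by fun_prop)
          (by fun_prop)]
        congr 1
        exact lintegral_subtype_comap measurableSet_Ioi
          fun r : ℝ => ENNReal.ofReal (r ^ (Module.finrank ℝ E - 1)) * f r

/-- The indicator of `(-∞, c]`, with values in `[0, ∞]`. -/
def cut (c r : ℝ) : ℝ≥0∞ := (Iic c).indicator 1 r

@[fun_prop]
lemma measurable_cut (c : ℝ) : Measurable (cut c) :=
  measurable_one.indicator measurableSet_Iic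

lemma cut_anti {c r s : ℝ} (h : r ≤ s) : cut c s ≤ cut c r := by
  unfold cut
  by_cases hs : s ≤ c
  · simp [hs, h.trans hs]
  · simp [hs]

lemma cut_le_mul (c r : ℝ) : cut c r ≤ cut c r * cut c r := by
  unfold cut
  by_cases hs : r ≤ c <;> simp [hs]

lemma lintegral_cut_rpow {s c : ℝ} (hs : -1 < s) (hc : 0 ≤ c) :
    ∫⁻ r in Ioi (0 : ℝ), cut c r * ENNReal.ofReal r ^ s = ENNReal.ofReal (c ^ (s + 1) / (s + 1)) := by
  have h1 : ∫⁻ r in Ioi (0 : ℝ), cut c r * ENNReal.ofReal r ^ s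
      = ∫⁻ r in Ioc 0 c, ENNReal.ofReal (r ^ s) := by
    have : ∀ r, cut c r * ENNReal.ofReal r ^ s
        = (Iic c).indicator (fun r => ENNReal.ofReal r ^ s) r := by
      intro r
      unfold cut
      by_cases hs : r ≤ c <;> simp [hs]
    simp_rw [this]
    rw [setLIntegral_indicator measurableSet_Iic, Set.inter_comm, Ioi_inter_Iic]
    refine setLIntegral_congr_fun measurableSet_Ioc fun r hr => ?_
    exact ENNReal.ofReal_rpow_of_pos hr.1
  rw [h1, ← ofReal_integral_eq_lintegral_ofReal]
  · rw [← intervalIntegral.integral_of_le hc, integral_rpow (Or.inl hs),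
      Real.zero_rpow (by linarith), sub_zero]
  · exact (intervalIntegral.intervalIntegrable_rpow' hs).1
  · filter_upwards [ae_restrict_mem measurableSet_Ioc] with r hr
    exact Real.rpow_nonneg hr.1.le _

/-- Polar coordinates with a power weight and a cutoff: the dimension only shifts the exponent. -/
lemma lintegral_radial_cut {E : Type*} [NormedAddCommGroup E] [InnerProductSpace ℝ E]
    [FiniteDimensional ℝ E] [MeasurableSpace E] [BorelSpace E] [Nontrivial E] (s s' c : ℝ)
    (hs : s' = s + (Module.finrank ℝ E - 1 : ℕ)) (Φ : ℝ → ℝ≥0∞) (hΦ : Measurable Φ) :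
    ∫⁻ x : E, cut c ‖x‖ * ENNReal.ofReal ‖x‖ ^ s * Φ ‖x‖ = (volume : Measure E).toSphere univ *
      ∫⁻ r in Ioi (0 : ℝ), cut c r * ENNReal.ofReal r ^ s' * Φ r := by
  rw [lintegral_radial (fun r => cut c r * ENNReal.ofReal r ^ s * Φ r) (by fun_prop)]
  congr 1
  refine setLIntegral_congr_fun measurableSet_Ioi fun r (hr : 0 < r) => ?_
  have h0 : ENNReal.ofReal r ≠ 0 := by simpa using hr
  rw [hs, ENNReal.rpow_add _ _ h0 ENNReal.ofReal_ne_top, ENNReal.ofReal_pow hr.le,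
    ENNReal.rpow_natCast]
  ring

lemma starProjection_unit {e : V3} (he : ‖e‖ = 1) (y : V3) :
    (ℝ ∙ e).starProjection y = ⟪y, e⟫ • e := by
  rw [Submodule.starProjection_unit_singleton ℝ he, real_inner_comm]

/-- Fubini for the orthogonal splitting of `ℝ³` along a unit vector. -/
lemma lintegral_split {e : V3} (he : ‖e‖ = 1) (F₁ F₂ : ℝ → ℝ≥0∞) (h₁ : Measurable F₁)
    (h₂ : Measurable F₂) :
    ∫⁻ y : V3, F₁ ‖⟪y, e⟫ • e‖ * F₂ ‖y - ⟪y, e⟫ • e‖ =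
      (∫⁻ p : (ℝ ∙ e : Submodule ℝ V3), F₁ ‖p‖) *
        ∫⁻ q : ((ℝ ∙ e)ᗮ : Submodule ℝ V3), F₂ ‖q‖ := by
  rw [← lintegral_prod_mul (by fun_prop) (by fun_prop), ← Measure.volume_eq_prod,
    ← (WithLp.volume_preserving_ofLp (ℝ ∙ e : Submodule ℝ V3)
      ((ℝ ∙ e)ᗮ : Submodule ℝ V3)).lintegral_comp (by fun_prop),
    ← (ℝ ∙ e).orthogonalDecomposition.measurePreserving.lintegral_comp (by fun_prop)]
  refine lintegral_congr fun y => ?_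
  have hp : ‖(ℝ ∙ e).orthogonalProjectionOnto y‖ = ‖⟪y, e⟫ • e‖ := by
    rw [← starProjection_unit he y]; rfl
  have hq : ‖(ℝ ∙ e)ᗮ.orthogonalProjectionOnto y‖ = ‖y - ⟪y, e⟫ • e‖ := by
    rw [← starProjection_unit he y, ← Submodule.starProjection_orthogonal_val]; rfl
  rw [Submodule.orthogonalDecomposition_apply]
  dsimp only
  rw [hp, hq]

lemma finrank_line {e : V3} (he : ‖e‖ = 1) :
    Module.finrank ℝ (ℝ ∙ e : Submodule ℝ V3) = 1 :=
  finrank_span_singleton (by rintro rfl; simp at he)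

lemma finrank_plane {e : V3} (he : ‖e‖ = 1) :
    Module.finrank ℝ ((ℝ ∙ e)ᗮ : Submodule ℝ V3) = 2 := by
  have := (ℝ ∙ e).finrank_add_finrank_orthogonal
  rw [finrank_line he, finrank_euclideanSpace_fin] at this
  omega

/-- The truncated weight `|z|^{2t} |z·ω|` on `|z| ≤ 2`; it dominates the collision kernel when
`2t = γ - 1`. -/
def W (t : ℝ) (z ω : V3) : ℝ≥0∞ :=
  cut 2 ‖z‖ * ENNReal.ofReal ‖z‖ ^ (2 * t) * ENNReal.ofReal |⟪z, ω⟫|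

@[fun_prop]
lemma measurable_W (t : ℝ) : Measurable fun p : V3 × V3 => W t p.1 p.2 := by
  unfold W; fun_prop

lemma norm_par {e : V3} (he : ‖e‖ = 1) (y : V3) : ‖⟪y, e⟫ • e‖ = |⟪y, e⟫| := by
  rw [norm_smul, he, mul_one, Real.norm_eq_abs]

lemma norm_par_le {e : V3} (he : ‖e‖ = 1) (y : V3) : ‖⟪y, e⟫ • e‖ ≤ ‖y‖ := by
  rw [norm_par he]
  simpa [he] using abs_real_inner_le_norm y e

lemma norm_perp_le {e : V3} (he : ‖e‖ = 1) (y : V3) : ‖y - ⟪y, e⟫ • e‖ ≤ ‖y‖ := by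
  rw [← starProjection_unit he y, ← Submodule.starProjection_orthogonal_val]
  exact Submodule.norm_starProjection_apply_le _ _

lemma ennreal_rpow_anti {t : ℝ} (ht : t ≤ 0) {x y : ℝ≥0∞} (h : x ≤ y) : y ^ t ≤ x ^ t := by
  have h2 : x ^ (-t) ≤ y ^ (-t) := ENNReal.rpow_le_rpow h (by linarith)
  have h3 := ENNReal.inv_le_inv.mpr h2
  rwa [← ENNReal.rpow_neg, ← ENNReal.rpow_neg, neg_neg] at h3

/-- Since `t ≤ 0`, `|y|^{2t} ≤ |p|^t |q|^t` for the components `p`, `q` of `y` along and across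
`e`: the weight is dominated by a product that Fubini separates. -/
lemma W_le {t : ℝ} (ht : t ≤ 0) {e : V3} (he : ‖e‖ = 1) (y : V3) :
    W t y e ≤ (cut 2 ‖⟪y, e⟫ • e‖ * ENNReal.ofReal ‖⟪y, e⟫ • e‖ ^ (1 + t)) *
      (cut 2 ‖y - ⟪y, e⟫ • e‖ * ENNReal.ofReal ‖y - ⟪y, e⟫ • e‖ ^ t) := by
  rcases eq_or_ne ⟪y, e⟫ 0 with h0 | h0
  · simp [W, h0]
  have hp := norm_par_le he y
  have hq := norm_perp_le he y
  have hpos : 0 < ‖⟪y, e⟫ • e‖ := by rw [norm_par he]; positivity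
  have hP : ENNReal.ofReal ‖⟪y, e⟫ • e‖ ≠ 0 := by simpa using hpos.trans_le le_rfl
  have hY : ENNReal.ofReal ‖y‖ ≠ 0 := by simpa using hpos.trans_le hp
  unfold W
  rw [two_mul, ENNReal.rpow_add _ _ hY ENNReal.ofReal_ne_top,
    ENNReal.rpow_add _ _ hP ENNReal.ofReal_ne_top, ENNReal.rpow_one, ← norm_par he]
  calc _ ≤ (cut 2 ‖y‖ * cut 2 ‖y‖) * (ENNReal.ofReal ‖y‖ ^ t * ENNReal.ofReal ‖y‖ ^ t) *
        ENNReal.ofReal ‖⟪y, e⟫ • e‖ := by gcongr; exact cut_le_mul _ _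
    _ ≤ (cut 2 ‖⟪y, e⟫ • e‖ * cut 2 ‖y - ⟪y, e⟫ • e‖) *
        (ENNReal.ofReal ‖⟪y, e⟫ • e‖ ^ t * ENNReal.ofReal ‖y - ⟪y, e⟫ • e‖ ^ t) *
        ENNReal.ofReal ‖⟪y, e⟫ • e‖ := by
        gcongr ?_ * ?_ * (?_ * ?_) * _
        · exact cut_anti hp
        · exact cut_anti hq
        · exact ennreal_rpow_anti ht (ENNReal.ofReal_le_ofReal hp)
        · exact ennreal_rpow_anti ht (ENNReal.ofReal_le_ofReal hq)
    _ = _ := by ring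

/-! ### The image density of the gain terms -/

/-- Component of `z` along the unit vector `ω`. -/
def par (z ω : V3) : V3 := ⟪z, ω⟫ • ω

/-- Component of `z` orthogonal to the unit vector `ω`. -/
def perp (z ω : V3) : V3 := z - ⟪z, ω⟫ • ω

@[fun_prop]
lemma measurable_par : Measurable fun p : V3 × V3 => par p.1 p.2 := by
  unfold par; fun_prop

@[fun_prop]
lemma measurable_perp : Measurable fun p : V3 × V3 => perp p.1 p.2 := by
  unfold perp; fun_prop

/-- Both components of `y` have the same radial law under the weight `W`, up to constants. -/
lemma W_radial {t : ℝ} (ht : t ≤ 0) (ht' : -2 < t) {e : V3} (he : ‖e‖ = 1) :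
    ∃ C : ℝ≥0∞, C ≠ ⊤ ∧ ∀ Φ : ℝ → ℝ≥0∞, Measurable Φ →
      (∫⁻ y : V3, W t y e * Φ ‖par y e‖ ≤
        C * ∫⁻ r in Ioi (0 : ℝ), cut 2 r * ENNReal.ofReal r ^ (1 + t) * Φ r) ∧
      (∫⁻ y : V3, W t y e * Φ ‖perp y e‖ ≤
        C * ∫⁻ r in Ioi (0 : ℝ), cut 2 r * ENNReal.ofReal r ^ (1 + t) * Φ r) := by
  have f1 := finrank_line he
  have f2 := finrank_plane he
  have : Nontrivial (ℝ ∙ e : Submodule ℝ V3) := Module.nontrivial_of_finrank_pos (R := ℝ) (by omega)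
  have : Nontrivial ((ℝ ∙ e)ᗮ : Submodule ℝ V3) :=
    Module.nontrivial_of_finrank_pos (R := ℝ) (by omega)
  have I1 := fun Φ hΦ => lintegral_radial_cut (E := (ℝ ∙ e : Submodule ℝ V3)) (1 + t) (1 + t) 2
    (by simp [f1]) Φ hΦ
  have I2 := fun Φ hΦ => lintegral_radial_cut (E := ((ℝ ∙ e)ᗮ : Submodule ℝ V3)) t (1 + t) 2
    (by simp [f2, add_comm]) Φ hΦ
  have I0 := lintegral_cut_rpow (s := 1 + t) (c := 2) (by linarith) (by norm_num)
  set c1 := (volume : Measure (ℝ ∙ e : Submodule ℝ V3)).toSphere univ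
  set c2 := (volume : Measure ((ℝ ∙ e)ᗮ : Submodule ℝ V3)).toSphere univ
  set J := ENNReal.ofReal ((2 : ℝ) ^ (1 + t + 1) / (1 + t + 1))
  have J1 : ∫⁻ p : (ℝ ∙ e : Submodule ℝ V3), cut 2 ‖p‖ * ENNReal.ofReal ‖p‖ ^ (1 + t) = c1 * J := by
    simpa [I0] using I1 (fun _ => 1) measurable_const
  have J2 : ∫⁻ p : ((ℝ ∙ e)ᗮ : Submodule ℝ V3), cut 2 ‖p‖ * ENNReal.ofReal ‖p‖ ^ t = c2 * J := by
    simpa [I0] using I2 (fun _ => 1) measurable_const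
  refine ⟨c1 * c2 * J, ENNReal.mul_ne_top (ENNReal.mul_ne_top (measure_ne_top _ _)
    (measure_ne_top _ _)) ENNReal.ofReal_ne_top, fun Φ hΦ => ⟨?_, ?_⟩⟩
  · calc _ ≤ ∫⁻ y : V3, (cut 2 ‖⟪y, e⟫ • e‖ * ENNReal.ofReal ‖⟪y, e⟫ • e‖ ^ (1 + t) *
          Φ ‖⟪y, e⟫ • e‖) *
          (cut 2 ‖y - ⟪y, e⟫ • e‖ * ENNReal.ofReal ‖y - ⟪y, e⟫ • e‖ ^ t) := by
          refine lintegral_mono fun y => ?_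
          rw [mul_right_comm]
          exact mul_le_mul_left (W_le ht he y) _
      _ = _ := by
          rw [lintegral_split he (fun r => cut 2 r * ENNReal.ofReal r ^ (1 + t) * Φ r)
            (fun r => cut 2 r * ENNReal.ofReal r ^ t) (by fun_prop) (by fun_prop), I1 Φ hΦ, J2]
          ring
  · calc _ ≤ ∫⁻ y : V3, (cut 2 ‖⟪y, e⟫ • e‖ * ENNReal.ofReal ‖⟪y, e⟫ • e‖ ^ (1 + t)) *
          (cut 2 ‖y - ⟪y, e⟫ • e‖ * ENNReal.ofReal ‖y - ⟪y, e⟫ • e‖ ^ t *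
          Φ ‖y - ⟪y, e⟫ • e‖) := by
          refine lintegral_mono fun y => ?_
          rw [← mul_assoc]
          exact mul_le_mul_left (W_le ht he y) _
      _ = _ := by
          rw [lintegral_split he (fun r => cut 2 r * ENNReal.ofReal r ^ (1 + t))
            (fun r => cut 2 r * ENNReal.ofReal r ^ t * Φ r) (by fun_prop) (by fun_prop), I2 Φ hΦ,
            J1]
          ring

/-- From one direction to all of them: the integral over `(z, ω)` is rotated into an average over
`O(3)`, so only the radial law of `T` for a fixed direction `e` matters. -/
lemma sphere_average {t : ℝ} {e : V3} (he : ‖e‖ = 1) (T : V3 → V3 → V3)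
    (hT : Measurable fun p : V3 × V3 => T p.1 p.2)
    (hrot : ∀ (L : V3 ≃ₗᵢ[ℝ] V3) y, T (L y) (L e) = L (T y e))
    {C : ℝ≥0∞} (hC : ∀ Φ : ℝ → ℝ≥0∞, Measurable Φ → ∫⁻ y : V3, W t y e * Φ ‖T y e‖ ≤
        C * ∫⁻ r in Ioi (0 : ℝ), cut 2 r * ENNReal.ofReal r ^ (1 + t) * Φ r)
    (G : V3 → ℝ≥0∞) (hG : Measurable G) :
    (volume : Measure V3).toSphere univ * ∫⁻ z : V3, ∫⁻ ω : Sph, W t z ω * G (T z ω) ∂sphM ≤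
      sphM univ * C * ∫⁻ p : V3, cut 2 ‖p‖ * ENNReal.ofReal ‖p‖ ^ (t - 1) * G p := by
  have hGm : Measurable fun p : O3 × V3 => G (p.1.iso p.2) :=
    hG.comp O3.continuous_iso.measurable
  have hTe : Measurable fun y : V3 => T y e :=
    hT.comp (by fun_prop : Measurable fun y : V3 => (y, e))
  -- the profile of the rotational average
  set A : ℝ → ℝ≥0∞ := fun r => rotAvg G (r • e) with hA
  have hAm : Measurable A := by
    refine Measurable.lintegral_prod_left' (f := fun p : O3 × ℝ => G (p.1.iso (p.2 • e))) ?_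
    exact hGm.comp (by fun_prop : Measurable fun p : O3 × ℝ => (p.1, p.2 • e))
  have hAe : ∀ x, rotAvg G x = A ‖x‖ := fun x => rotAvg_eq G (by simp [norm_smul, he])
  have hWrot : ∀ (L : V3 ≃ₗᵢ[ℝ] V3) y, W t (L y) (L e) = W t y e := fun L y => by
    simp [W]
  have hF : Measurable fun p : V3 × V3 => W t p.1 p.2 * G (T p.1 p.2) := by fun_prop
  have hWe : Measurable fun y : V3 => W t y e :=
    (measurable_W t).comp (g := fun p : V3 × V3 => W t p.1 p.2) (f := fun y : V3 => (y, e))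
      (by fun_prop)
  have hGR : ∀ x : V3, Measurable fun R : O3 => G (R.iso x) := fun x =>
    hGm.comp (g := fun p : O3 × V3 => G (p.1.iso p.2)) (f := fun R : O3 => (R, x)) (by fun_prop)
  have hGT : Measurable fun p : O3 × V3 => G (p.1.iso (T p.2 e)) :=
    hGm.comp (g := fun p : O3 × V3 => G (p.1.iso p.2)) (f := fun p : O3 × V3 => (p.1, T p.2 e))
      (measurable_fst.prodMk (hTe.comp measurable_snd))
  have hF2 : Measurable fun p : O3 × V3 => W t p.2 e * G (p.1.iso (T p.2 e)) :=
    (hWe.comp measurable_snd).mul hGT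
  have h1 : ∫⁻ z : V3, ∫⁻ ω : Sph, W t z ω * G (T z ω) ∂sphM
      = sphM univ * ∫⁻ y : V3, W t y e * A ‖T y e‖ := by
    calc _ = ∫⁻ ω : Sph, (∫⁻ z : V3, W t z ω * G (T z ω)) ∂sphM :=
          lintegral_lintegral_swap (hF.comp (by fun_prop :
            Measurable fun p : V3 × Sph => (p.1, (p.2 : V3)))).aemeasurable
      _ = sphM univ * ∫⁻ R : O3, (∫⁻ z : V3, W t z (R.iso e) * G (T z (R.iso e))) ∂haarO3 :=
          lintegral_sphM (fun ω => ∫⁻ z : V3, W t z ω * G (T z ω))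
            (Measurable.lintegral_prod_left' hF) he
      _ = sphM univ * ∫⁻ R : O3, (∫⁻ y : V3, W t y e * G (R.iso (T y e))) ∂haarO3 := by
          congr 1
          refine lintegral_congr fun R => ?_
          rw [← lintegral_rot R.iso]
          simp_rw [hWrot, hrot]
      _ = sphM univ * ∫⁻ y : V3, ∫⁻ R : O3, W t y e * G (R.iso (T y e)) ∂haarO3 := by
          congr 1
          exact lintegral_lintegral_swap hF2.aemeasurable
      _ = _ := by
          congr 1
          refine lintegral_congr fun y => ?_
          rw [← hAe]
          exact lintegral_const_mul _
            (hGR _)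
  have h2 : ∫⁻ p : V3, cut 2 ‖p‖ * ENNReal.ofReal ‖p‖ ^ (t - 1) * G p =
      (volume : Measure V3).toSphere univ *
        ∫⁻ r in Ioi (0 : ℝ), cut 2 r * ENNReal.ofReal r ^ (1 + t) * A r := by
    rw [lintegral_radial_rotAvg (fun r => cut 2 r * ENNReal.ofReal r ^ (t - 1)) (by fun_prop) G hG]
    simp_rw [hAe]
    exact lintegral_radial_cut (t - 1) (1 + t) 2 (by simp; ring) A hAm
  rw [h1, h2]
  calc _ ≤ (volume : Measure V3).toSphere univ * (sphM univ *
        (C * ∫⁻ r in Ioi (0 : ℝ), cut 2 r * ENNReal.ofReal r ^ (1 + t) * A r)) := by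
        gcongr; exact hC A hAm
    _ = _ := by ring

/-- The Carleman-type estimate: under the weight `W`, the laws of both components of `z` with
respect to a random direction have density at most a multiple of `|p|^{t-1}`. -/
lemma gain_bound {t : ℝ} (ht : t ≤ 0) (ht' : -2 < t) :
    ∃ C : ℝ≥0∞, C ≠ ⊤ ∧ ∀ G : V3 → ℝ≥0∞, Measurable G →
      (∫⁻ z : V3, ∫⁻ ω : Sph, W t z ω * G (par z ω) ∂sphM ≤
        C * ∫⁻ p : V3, cut 2 ‖p‖ * ENNReal.ofReal ‖p‖ ^ (t - 1) * G p) ∧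
      (∫⁻ z : V3, ∫⁻ ω : Sph, W t z ω * G (perp z ω) ∂sphM ≤
        C * ∫⁻ p : V3, cut 2 ‖p‖ * ENNReal.ofReal ‖p‖ ^ (t - 1) * G p) := by
  set e : V3 := EuclideanSpace.single 0 1
  have he : ‖e‖ = 1 := by simp [e]
  obtain ⟨C, hC, h⟩ := W_radial ht ht' he
  -- the factor `sphM univ` on both sides of `sphere_average` is cancelled below
  have hs0 : sphM univ ≠ 0 := by
    rw [sphM, Measure.measure_univ_ne_zero]
    exact Measure.toSphere_ne_zero _
  have hs1 : sphM univ ≠ ⊤ := measure_ne_top _ _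
  refine ⟨C, hC, fun G hG => ⟨?_, ?_⟩⟩
  · have := sphere_average he par measurable_par (by intro L y; simp [par])
      (fun Φ hΦ => (h Φ hΦ).1) G hG
    rw [mul_assoc] at this
    exact (ENNReal.mul_le_mul_iff_right hs0 hs1).mp this
  · have := sphere_average he perp measurable_perp (by intro L y; simp [perp])
      (fun Φ hΦ => (h Φ hΦ).2) G hG
    rw [mul_assoc] at this
    exact (ENNReal.mul_le_mul_iff_right hs0 hs1).mp this

/-! ### The three terms of `K^m` -/

lemma vpost_eq (v u : V3) (ω : Sph) : vpost v u ω = v - par (v - u) ω := rfl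

lemma upost_eq (v u : V3) (ω : Sph) : upost v u ω = v - perp (v - u) ω := by
  unfold upost perp; abel

@[fun_prop]
lemma measurable_vpost (v : V3) : Measurable fun p : V3 × Sph => vpost v p.1 p.2 := by
  unfold vpost; fun_prop

@[fun_prop]
lemma measurable_upost (v : V3) : Measurable fun p : V3 × Sph => upost v p.1 p.2 := by
  unfold upost; fun_prop

lemma norm_sph (ω : Sph) : ‖(ω : V3)‖ = 1 := by simp

/-- The singular radial factor of the kernel bound, with exponents `γ` (loss term) and
`-(3 - γ) / 2` (gain terms). -/
def sing (γ : ℝ) (r : ℝ) : ℝ≥0∞ :=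
  ENNReal.ofReal r ^ γ + ENNReal.ofReal r ^ (-(3 - γ) / 2)

@[fun_prop]
lemma measurable_sing (γ : ℝ) : Measurable (sing γ) := by unfold sing; fun_prop

/-- The three arguments `v'`, `u'`, `u` at which `K` evaluates a function. -/
def slot (v : V3) : Fin 3 → V3 × Sph → V3
  | 0, p => vpost v p.1 p.2
  | 1, p => upost v p.1 p.2
  | 2, p => p.1

/-- The square-root Maxwellian weight accompanying each of the three arguments. -/
def wt (v : V3) : Fin 3 → V3 × Sph → ℝ
  | 0, p => √(gm p.1 * gm (upost v p.1 p.2))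
  | 1, p => √(gm p.1 * gm (vpost v p.1 p.2))
  | 2, p => √(gm v * gm p.1)

lemma measurable_slot (v : V3) (i : Fin 3) : Measurable (slot v i) := by
  match i with
  | 0 => exact measurable_vpost v
  | 1 => exact measurable_upost v
  | 2 => exact measurable_fst

lemma measurable_gm : Measurable gm := by unfold gm; fun_prop

lemma measurable_wt (v : V3) (i : Fin 3) : Measurable (wt v i) := by
  match i with
  | 0 => exact ((measurable_gm.comp measurable_fst).mul
      (measurable_gm.comp (measurable_upost v))).sqrt
  | 1 => exact ((measurable_gm.comp measurable_fst).mul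
      (measurable_gm.comp (measurable_vpost v))).sqrt
  | 2 => exact ((measurable_gm.comp measurable_fst).const_mul _).sqrt

/-- Cauchy–Schwarz trades the angular factor for one radial power. -/
lemma weight_le (γ c : ℝ) (z : V3) (ω : Sph) :
    cut c ‖z‖ * ENNReal.ofReal ‖z‖ ^ (γ - 1) * ENNReal.ofReal |⟪z, (ω : V3)⟫| ≤
      cut c ‖z‖ * ENNReal.ofReal ‖z‖ ^ γ := by
  rcases eq_or_ne z 0 with rfl | hz
  · simp
  have hz' : ENNReal.ofReal ‖z‖ ≠ 0 := by simpa using hz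
  have hin : |⟪z, (ω : V3)⟫| ≤ ‖z‖ := by
    simpa [norm_sph] using abs_real_inner_le_norm z (ω : V3)
  calc _ ≤ cut c ‖z‖ * ENNReal.ofReal ‖z‖ ^ (γ - 1) * ENNReal.ofReal ‖z‖ := by gcongr
    _ = _ := by
      have := ENNReal.rpow_add (γ - 1) 1 hz' ENNReal.ofReal_ne_top
      rw [sub_add_cancel, ENNReal.rpow_one] at this
      rw [this, mul_assoc]

/-- Change of variables in all three terms of `K`: the image densities are controlled by the
singular radial factor. -/
lemma slot_bound {γ : ℝ} (hγ1 : -3 < γ) (hγ2 : γ ≤ 1) :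
    ∃ C : ℝ≥0∞, C ≠ ⊤ ∧ ∀ (v : V3) (i : Fin 3) (F : V3 → ℝ≥0∞), Measurable F →
      ∫⁻ u : V3, ∫⁻ ω : Sph, W ((γ - 1) / 2) (v - u) ω * F (slot v i (u, ω)) ∂sphM ≤
        C * ∫⁻ η : V3, cut 2 ‖v - η‖ * sing γ ‖v - η‖ * F η := by
  obtain ⟨C, hC, h⟩ := gain_bound (t := (γ - 1) / 2) (by linarith) (by linarith)
  have he : (γ - 1) / 2 - 1 = -(3 - γ) / 2 := by ring
  rw [he] at h
  refine ⟨C + sphM univ, ENNReal.add_ne_top.mpr ⟨hC, measure_ne_top _ _⟩, fun v i F hF => ?_⟩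
  have hR : ∫⁻ η : V3, cut 2 ‖v - η‖ * sing γ ‖v - η‖ * F η
      = ∫⁻ p : V3, cut 2 ‖p‖ * sing γ ‖p‖ * F (v - p) := by
    rw [← lintegral_sub_left_eq_self _ v]
    simp
  have hG : Measurable fun p : V3 => F (v - p) := by fun_prop
  have hgain : C * ∫⁻ p : V3, cut 2 ‖p‖ * ENNReal.ofReal ‖p‖ ^ (-(3 - γ) / 2) * F (v - p) ≤
      (C + sphM univ) * ∫⁻ p : V3, cut 2 ‖p‖ * sing γ ‖p‖ * F (v - p) := by
    gcongr
    · exact le_self_add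
    · exact le_add_self
  rw [hR]
  match i with
  | 0 =>
    refine le_trans (le_of_eq ?_) (((h _ hG).1).trans hgain)
    exact lintegral_sub_left_eq_self
      (fun z => ∫⁻ ω : Sph, W ((γ - 1) / 2) z ω * F (v - par z ω) ∂sphM) v
  | 1 =>
    refine le_trans (le_of_eq ?_) (((h _ hG).2).trans hgain)
    simp only [slot, upost_eq]
    exact lintegral_sub_left_eq_self
      (fun z => ∫⁻ ω : Sph, W ((γ - 1) / 2) z ω * F (v - perp z ω) ∂sphM) v
  | 2 =>
    rw [← lintegral_sub_left_eq_self _ v]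
    simp only [slot, sub_sub_cancel]
    calc _ ≤ ∫⁻ z : V3, ∫⁻ _ω : Sph, cut 2 ‖z‖ * sing γ ‖z‖ * F (v - z) ∂sphM := by
          refine lintegral_mono fun z => lintegral_mono fun ω => ?_
          gcongr ?_ * _
          unfold W
          rw [mul_div_cancel₀ _ (two_ne_zero' ℝ)]
          refine (weight_le γ 2 z ω).trans ?_
          gcongr
          exact le_self_add
      _ = sphM univ * ∫⁻ p : V3, cut 2 ‖p‖ * sing γ ‖p‖ * F (v - p) := by
          simp_rw [lintegral_const]
          rw [lintegral_mul_const _ (by fun_prop), mul_comm]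
      _ ≤ _ := by gcongr; exact le_add_self

lemma norm_sq_le_of_near {x v : V3} (h : ‖x - v‖ ≤ 2) : ‖v‖ ^ 2 ≤ 2 * ‖x‖ ^ 2 + 8 := by
  have h1 : ‖v‖ ≤ ‖x‖ + 2 := by
    have := norm_sub_norm_le v x
    rw [norm_sub_rev] at this
    linarith
  nlinarith [sq_nonneg (‖x‖ - 2), norm_nonneg v, norm_nonneg x]

lemma sqrt_gm_le {x y v : V3} (hx : ‖x - v‖ ≤ 2) (hy : ‖y - v‖ ≤ 2) :
    √(gm x * gm y) ≤ (2 * π)⁻¹ * exp 2 * exp (-‖v‖ ^ 2 / 4) := by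
  have h1 := norm_sq_le_of_near hx
  have h2 := norm_sq_le_of_near hy
  refine Real.sqrt_le_iff.mpr ⟨by positivity, ?_⟩
  have e : ((2 * π)⁻¹ * exp 2 * exp (-‖v‖ ^ 2 / 4)) ^ 2
      = (2 * π)⁻¹ ^ 2 * exp (4 - ‖v‖ ^ 2 / 2) := by
    rw [mul_assoc, ← Real.exp_add, mul_pow, ← Real.exp_nat_mul]
    congr 2
    push_cast; ring
  have e' : gm x * gm y = (2 * π)⁻¹ ^ 2 * exp (-‖x‖ ^ 2 / 2 + -‖y‖ ^ 2 / 2) := by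
    unfold gm; rw [Real.exp_add]; ring
  rw [e, e']
  gcongr
  linarith

/-- If `|v - u| ≤ 2`, all of `u`, `v'`, `u'` are within distance `2` of `v`. -/
lemma wt_le {v : V3} {p : V3 × Sph} (h : ‖v - p.1‖ ≤ 2) (i : Fin 3) :
    wt v i p ≤ (2 * π)⁻¹ * exp 2 * exp (-‖v‖ ^ 2 / 4) := by
  have hu : ‖p.1 - v‖ ≤ 2 := by rwa [norm_sub_rev]
  have h1 : ‖vpost v p.1 p.2 - v‖ ≤ 2 := by
    rw [vpost_eq, sub_sub_cancel_left, norm_neg]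
    exact (norm_par_le (norm_sph _) _).trans h
  have h2 : ‖upost v p.1 p.2 - v‖ ≤ 2 := by
    rw [upost_eq, sub_sub_cancel_left, norm_neg]
    exact (norm_perp_le (norm_sph _) _).trans h
  match i with
  | 0 => exact sqrt_gm_le hu h2
  | 1 => exact sqrt_gm_le hu h1
  | 2 => exact sqrt_gm_le (by simp) hu

lemma wt_nonneg (v : V3) (i : Fin 3) (p : V3 × Sph) : 0 ≤ wt v i p := by
  match i with
  | 0 => exact Real.sqrt_nonneg _
  | 1 => exact Real.sqrt_nonneg _
  | 2 => exact Real.sqrt_nonneg _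

/-- The integrand of the `i`-th term of `K^m`, without the function `K^m` acts on. -/
def dens (γ : ℝ) (b χ : ℝ → ℝ) (v : V3) (i : Fin 3) (p : V3 × Sph) : ℝ :=
  Bker γ b (v - p.1) p.2 * χ ‖v - p.1‖ * wt v i p

lemma measurable_dens {γ : ℝ} {b χ : ℝ → ℝ} (hb : Measurable b) (hχ : Measurable χ) (v : V3)
    (i : Fin 3) : Measurable (dens γ b χ v i) := by
  have := measurable_wt v i
  unfold dens Bker
  fun_prop

lemma Bker_nonneg {γ : ℝ} {b : ℝ → ℝ} (hb : ∀ s, 0 ≤ b s) (z : V3) (ω : Sph) :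
    0 ≤ Bker γ b z ω := by
  have := hb (⟪z, (ω : V3)⟫ / ‖z‖)
  unfold Bker; positivity

lemma dens_nonneg {γ : ℝ} {b χ : ℝ → ℝ} (hb : ∀ s, 0 ≤ b s) (hχ : ∀ s, 0 ≤ χ s) (v : V3)
    (i : Fin 3) (p : V3 × Sph) : 0 ≤ dens γ b χ v i p :=
  mul_nonneg (mul_nonneg (Bker_nonneg hb _ _) (hχ _)) (wt_nonneg v i p)

/-- The angular bound `b(cos φ) ≤ C|cos φ|` lowers the radial exponent from `γ` to `γ - 1`. -/
lemma Bker_le {γ Cb m : ℝ} {b χ : ℝ → ℝ} (hb : ∀ s, 0 ≤ b s ∧ b s ≤ Cb * |s|)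
    (hχ : IsCutoff m χ) (z : V3) (ω : Sph) :
    ENNReal.ofReal (Bker γ b z ω * χ ‖z‖) ≤ ENNReal.ofReal Cb *
      (cut (2 * m) ‖z‖ * ENNReal.ofReal ‖z‖ ^ (γ - 1) * ENNReal.ofReal |⟪z, (ω : V3)⟫|) := by
  obtain ⟨-, hχ1, -, hχ2⟩ := hχ
  rcases eq_or_ne z 0 with rfl | hz
  · -- at `z = 0` the argument of `b` is the junk value `0 / 0 = 0`, where `b` vanishes
    have : b 0 = 0 := le_antisymm (by simpa using (hb 0).2) (hb 0).1
    simp [Bker, this]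
  by_cases hm : ‖z‖ ≤ 2 * m
  · have hz' : 0 < ‖z‖ := by simpa using hz
    have hCb : 0 ≤ Cb := by simpa using (hb 1).1.trans (hb 1).2
    have hc : cut (2 * m) ‖z‖ = 1 := by simp [cut, hm]
    rw [hc, one_mul, ENNReal.ofReal_rpow_of_pos hz', ← ENNReal.ofReal_mul (by positivity),
      ← ENNReal.ofReal_mul hCb]
    refine ENNReal.ofReal_le_ofReal ?_
    calc Bker γ b z ω * χ ‖z‖ ≤ Bker γ b z ω :=
          mul_le_of_le_one_right (Bker_nonneg (fun s => (hb s).1) _ _) (hχ1 _).2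
      _ ≤ ‖z‖ ^ γ * (Cb * |⟪z, (ω : V3)⟫ / ‖z‖|) := by
          unfold Bker; gcongr; exact (hb _).2
      _ = _ := by
          rw [Real.rpow_sub_one hz'.ne', abs_div, abs_of_pos hz']
          ring
  · rw [hχ2 _ (not_le.mp hm).le]; simp

lemma cut_mono {c d : ℝ} (h : c ≤ d) (r : ℝ) : cut c r ≤ cut d r := by
  unfold cut
  by_cases hs : r ≤ c
  · simp [hs, hs.trans h]
  · simp [hs]

/-- Gaussian decay in `v` combined with the bound on the collision kernel. -/
lemma dens_le {γ Cb m : ℝ} {b χ : ℝ → ℝ} (hm : m ≤ 1) (hb : ∀ s, 0 ≤ b s ∧ b s ≤ Cb * |s|)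
    (hχ : IsCutoff m χ) (v : V3) (i : Fin 3) (p : V3 × Sph) :
    ENNReal.ofReal (dens γ b χ v i p) ≤
      ENNReal.ofReal (Cb * ((2 * π)⁻¹ * exp 2 * exp (-‖v‖ ^ 2 / 4))) *
      (cut (2 * m) ‖v - p.1‖ * ENNReal.ofReal ‖v - p.1‖ ^ (γ - 1) *
        ENNReal.ofReal |⟪v - p.1, (p.2 : V3)⟫|) := by
  have hCb : 0 ≤ Cb := by simpa using (hb 1).1.trans (hb 1).2
  have hB := Bker_nonneg (γ := γ) (fun s => (hb s).1) (v - p.1) p.2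
  have hχ0 := (hχ.2.1 ‖v - p.1‖).1
  have key := Bker_le (γ := γ) hb hχ (v - p.1) p.2
  by_cases hle : ‖v - p.1‖ ≤ 2
  · rw [ENNReal.ofReal_mul hCb, dens, ENNReal.ofReal_mul (mul_nonneg hB hχ0), mul_right_comm]
    gcongr
    exact wt_le hle i
  · rw [dens, hχ.2.2.2 _ (by linarith [not_le.mp hle])]; simp

/-! ### Densities from domination -/

/-- If the image of the measure `d ρ` under `φ` is dominated by `h` times Lebesgue measure, it has
a density between `0` and `h` (Radon–Nikodym). -/
lemma exists_density {X : Type*} [MeasurableSpace X] (ρ : Measure X) (d : X → ℝ)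
    (hd : Measurable d) (hd0 : ∀ x, 0 ≤ d x) (hfin : ∫⁻ x, ENNReal.ofReal (d x) ∂ρ ≠ ⊤)
    (φ : X → V3) (hφ : Measurable φ) (h : V3 → ℝ) (hh0 : ∀ x, 0 ≤ h x)
    (hle : ∀ F : V3 → ℝ≥0∞, Measurable F →
      ∫⁻ x, ENNReal.ofReal (d x) * F (φ x) ∂ρ ≤ ∫⁻ η, ENNReal.ofReal (h η) * F η) :
    ∃ k : V3 → ℝ, (∀ η, 0 ≤ k η ∧ k η ≤ h η) ∧ ∀ g : V3 → ℝ, Measurable g →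
      (∃ M, ∀ η, |g η| ≤ M) →
      Integrable (fun η => k η * g η) ∧ ∫ x, d x * g (φ x) ∂ρ = ∫ η, k η * g η := by
  set ν : Measure V3 := (ρ.withDensity fun x => ENNReal.ofReal (d x)).map φ with hν
  have hνfin : IsFiniteMeasure ν := by
    have := isFiniteMeasure_withDensity hfin
    rw [hν]; infer_instance
  have hνs : ∀ s, MeasurableSet s → ν s ≤ ∫⁻ η in s, ENNReal.ofReal (h η) := by
    intro s hs
    have := hle (s.indicator 1) (measurable_one.indicator hs)
    rw [hν, Measure.map_apply hφ hs, withDensity_apply _ (hφ hs), ← lintegral_indicator (hφ hs),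
      ← lintegral_indicator hs]
    refine (le_of_eq ?_).trans (this.trans (le_of_eq ?_))
    · refine lintegral_congr fun x => ?_
      by_cases hx : φ x ∈ s <;> simp [Set.indicator, hx]
    · refine lintegral_congr fun x => ?_
      by_cases hx : x ∈ s <;> simp [hx]
  have hac : ν ≪ volume := by
    refine Measure.AbsolutelyContinuous.mk fun s hs h0 => ?_
    have := hνs s hs
    rw [Measure.restrict_eq_zero.mpr h0] at this
    simpa using this
  set κ := ν.rnDeriv volume with hκ
  have hκm : Measurable κ := Measure.measurable_rnDeriv _ _
  have hκle : κ ≤ᵐ[volume] fun η => ENNReal.ofReal (h η) := by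
    refine ae_le_of_forall_setLIntegral_le_of_sigmaFinite hκm fun s hs _ => ?_
    rw [← withDensity_apply _ hs, hκ, Measure.withDensity_rnDeriv_eq _ _ hac]
    exact hνs s hs
  have hkae : (fun η => min (κ η).toReal (h η)) =ᵐ[volume] fun η => (κ η).toReal := by
    filter_upwards [hκle] with η hη
    exact min_eq_left (ENNReal.toReal_le_of_le_ofReal (hh0 η) hη)
  -- the minimum turns the almost everywhere bound into one valid at every point
  refine ⟨fun η => min (κ η).toReal (h η), fun η => ⟨le_min ENNReal.toReal_nonneg (hh0 η),
    min_le_right _ _⟩, fun g hg ⟨M, hM⟩ => ?_⟩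
  have hae : (fun η => min (κ η).toReal (h η) * g η) =ᵐ[volume] fun η => (κ η).toReal • g η := by
    filter_upwards [hkae] with η hη
    rw [hη, smul_eq_mul]
  constructor
  · refine Integrable.congr ?_ hae.symm
    rw [hκ, integrable_rnDeriv_smul_iff hac]
    exact Integrable.of_bound hg.aestronglyMeasurable M (.of_forall fun η => by simpa using hM η)
  · rw [integral_congr_ae hae, hκ, integral_rnDeriv_smul hac, hν,
      integral_map hφ.aemeasurable hg.aestronglyMeasurable,
      integral_withDensity_eq_integral_toReal_smul (by fun_prop) (by simp)]
    refine integral_congr_ae (.of_forall fun x => ?_)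
    simp [ENNReal.toReal_ofReal (hd0 x)]

/-! ### Mass and kernel bounds for each term -/

/-- The pointwise majorant of the kernel. -/
def maj (γ C : ℝ) (v η : V3) : ℝ :=
  C * (‖v - η‖ ^ γ + ‖v - η‖ ^ (-(3 - γ) / 2)) * exp (-(‖v‖ ^ 2 + ‖η‖ ^ 2) / 16)

lemma maj_nonneg {γ C : ℝ} (hC : 0 ≤ C) (v η : V3) : 0 ≤ maj γ C v η := by
  unfold maj; positivity

/-- On `|η - v| ≤ 2` the decay in `v` is shared between `v` and `η`. -/
lemma exp_share {v η : V3} (h : ‖v - η‖ ≤ 2) :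
    exp (-‖v‖ ^ 2 / 4) ≤ exp (1 / 2) * exp (-(‖v‖ ^ 2 + ‖η‖ ^ 2) / 16) := by
  have := norm_sq_le_of_near h
  rw [← Real.exp_add]
  gcongr
  nlinarith [sq_nonneg ‖v‖]

/-- The image measure of each term of `K^m` is dominated by `maj`, with a constant independent of
`m`, `χ` and `v`. -/
lemma dens_slot_le {γ : ℝ} (hγ1 : -3 < γ) (hγ2 : γ ≤ 1) {b : ℝ → ℝ} (hbm : Measurable b)
    {Cb : ℝ} (hb : ∀ s, 0 ≤ b s ∧ b s ≤ Cb * |s|) :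
    ∃ C : ℝ, 0 ≤ C ∧ ∀ m ≤ 1, ∀ χ, IsCutoff m χ → ∀ (v : V3) (i : Fin 3) (F : V3 → ℝ≥0∞),
      Measurable F →
      ∫⁻ p, ENNReal.ofReal (dens γ b χ v i p) * F (slot v i p) ∂(volume.prod sphM) ≤
        ∫⁻ η, ENNReal.ofReal (maj γ C v η) * F η := by
  obtain ⟨C, hC, hslot⟩ := slot_bound hγ1 hγ2
  have hCb : 0 ≤ Cb := by simpa using (hb 1).1.trans (hb 1).2
  set D := Cb * ((2 * π)⁻¹ * exp 2) * C.toReal * exp (1 / 2) with hD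
  refine ⟨D, by positivity, fun m hm χ hχ v i F hF => ?_⟩
  have hmd : Measurable fun p => ENNReal.ofReal (dens γ b χ v i p) * F (slot v i p) :=
    (measurable_dens hbm hχ.1.continuous.measurable v i).ennreal_ofReal.mul
      (hF.comp (measurable_slot v i))
  set A := Cb * ((2 * π)⁻¹ * exp 2 * exp (-‖v‖ ^ 2 / 4)) with hA
  have hA0 : 0 ≤ A := by positivity
  calc _ = ∫⁻ u : V3, ∫⁻ ω : Sph, ENNReal.ofReal (dens γ b χ v i (u, ω)) * F (slot v i (u, ω))
        ∂sphM := lintegral_prod _ hmd.aemeasurable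
    _ ≤ ∫⁻ u : V3, ∫⁻ ω : Sph, ENNReal.ofReal A *
        (W ((γ - 1) / 2) (v - u) ω * F (slot v i (u, ω))) ∂sphM := by
        refine lintegral_mono fun u => lintegral_mono fun ω => ?_
        rw [← mul_assoc]
        gcongr ?_ * _
        refine (dens_le hm hb hχ v i (u, ω)).trans ?_
        unfold W
        rw [mul_div_cancel₀ _ (two_ne_zero' ℝ)]
        gcongr
        exact cut_mono (by linarith) _
    _ = ENNReal.ofReal A * ∫⁻ u : V3, ∫⁻ ω : Sph,
        W ((γ - 1) / 2) (v - u) ω * F (slot v i (u, ω)) ∂sphM := by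
        simp_rw [lintegral_const_mul' _ _ ENNReal.ofReal_ne_top]
    _ ≤ ENNReal.ofReal A * (C * ∫⁻ η : V3, cut 2 ‖v - η‖ * sing γ ‖v - η‖ * F η) := by
        gcongr; exact hslot v i F hF
    _ = ∫⁻ η : V3, ENNReal.ofReal A * C * (cut 2 ‖v - η‖ * sing γ ‖v - η‖ * F η) := by
        rw [← mul_assoc, lintegral_const_mul' _ _ (ENNReal.mul_ne_top ENNReal.ofReal_ne_top hC)]
    _ ≤ _ := by
        refine lintegral_mono_ae ?_
        filter_upwards [compl_mem_ae_iff.mpr (measure_singleton (μ := (volume : Measure V3)) v)]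
          with η hη
        have hpos : 0 < ‖v - η‖ := norm_pos_iff.mpr (sub_ne_zero.mpr (Ne.symm hη))
        rw [← mul_assoc]
        gcongr ?_ * _
        by_cases hle : ‖v - η‖ ≤ 2
        · have hc : cut 2 ‖v - η‖ = 1 := by simp [cut, hle]
          rw [hc, one_mul, sing, ENNReal.ofReal_rpow_of_pos hpos, ENNReal.ofReal_rpow_of_pos hpos,
            ← ENNReal.ofReal_toReal hC, ← ENNReal.ofReal_add (by positivity) (by positivity),
            ← ENNReal.ofReal_mul hA0, ← ENNReal.ofReal_mul (by positivity)]
          refine ENNReal.ofReal_le_ofReal ?_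
          have := exp_share hle
          calc _ = Cb * ((2 * π)⁻¹ * exp 2) * C.toReal *
                (‖v - η‖ ^ γ + ‖v - η‖ ^ (-(3 - γ) / 2)) * exp (-‖v‖ ^ 2 / 4) := by
                rw [hA]; ring
            _ ≤ Cb * ((2 * π)⁻¹ * exp 2) * C.toReal *
                (‖v - η‖ ^ γ + ‖v - η‖ ^ (-(3 - γ) / 2)) *
                (exp (1 / 2) * exp (-(‖v‖ ^ 2 + ‖η‖ ^ 2) / 16)) := by gcongr
            _ = _ := by rw [maj, hD]; ring
        · simp [cut, hle]

/-- The total mass of each term is of order `m^{3+γ}`: the radial integral of `r^γ r²` over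
`r ≤ 2m`. -/
lemma dens_mass_le {γ : ℝ} (hγ1 : -3 < γ) {b : ℝ → ℝ} (hbm : Measurable b)
    {Cb : ℝ} (hb : ∀ s, 0 ≤ b s ∧ b s ≤ Cb * |s|) :
    ∃ C : ℝ, 0 ≤ C ∧ ∀ m : ℝ, 0 < m → m ≤ 1 → ∀ χ, IsCutoff m χ → ∀ (v : V3) (i : Fin 3),
      ∫⁻ p, ENNReal.ofReal (dens γ b χ v i p) ∂(volume.prod sphM) ≤
        ENNReal.ofReal (C * m ^ (3 + γ) * exp (-‖v‖ ^ 2 / 6)) := by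
  have hCb : 0 ≤ Cb := by simpa using (hb 1).1.trans (hb 1).2
  have hγ3 : 0 < γ + 2 + 1 := by linarith
  set σ := sphM.real univ with hσ
  have hσ' : sphM univ = ENNReal.ofReal σ := by
    rw [hσ, Measure.real, ENNReal.ofReal_toReal (measure_ne_top _ _)]
  have hσ0 : 0 ≤ σ := measureReal_nonneg
  set D := Cb * ((2 * π)⁻¹ * exp 2) * σ * σ * (2 ^ (γ + 2 + 1) / (γ + 2 + 1)) with hD
  refine ⟨D, by positivity, fun m hm0 hm χ hχ v i => ?_⟩
  have hmd : Measurable fun p => ENNReal.ofReal (dens γ b χ v i p) :=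
    (measurable_dens hbm hχ.1.continuous.measurable v i).ennreal_ofReal
  set A := Cb * ((2 * π)⁻¹ * exp 2 * exp (-‖v‖ ^ 2 / 4)) with hA
  have hA0 : 0 ≤ A := by positivity
  calc _ = ∫⁻ u : V3, ∫⁻ ω : Sph, ENNReal.ofReal (dens γ b χ v i (u, ω)) ∂sphM :=
        lintegral_prod _ hmd.aemeasurable
    _ ≤ ∫⁻ u : V3, ∫⁻ _ω : Sph, ENNReal.ofReal A *
        (cut (2 * m) ‖v - u‖ * ENNReal.ofReal ‖v - u‖ ^ γ) ∂sphM := by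
        refine lintegral_mono fun u => lintegral_mono fun ω => ?_
        refine (dens_le hm hb hχ v i (u, ω)).trans ?_
        exact mul_le_mul_right (weight_le _ _ _ _) _
    _ = ENNReal.ofReal A * ENNReal.ofReal σ *
        ∫⁻ u : V3, cut (2 * m) ‖v - u‖ * ENNReal.ofReal ‖v - u‖ ^ γ := by
        simp_rw [lintegral_const]
        rw [lintegral_mul_const _ (by fun_prop), lintegral_const_mul _ (by fun_prop), hσ']
        ring
    _ = ENNReal.ofReal A * ENNReal.ofReal σ *
        ∫⁻ z : V3, cut (2 * m) ‖z‖ * ENNReal.ofReal ‖z‖ ^ γ * 1 := by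
        simp_rw [mul_one]
        congr 1
        exact lintegral_sub_left_eq_self
          (fun z : V3 => cut (2 * m) ‖z‖ * ENNReal.ofReal ‖z‖ ^ γ) v
    _ = ENNReal.ofReal (A * σ * σ * ((2 * m) ^ (γ + 2 + 1) / (γ + 2 + 1))) := by
        rw [lintegral_radial_cut γ (γ + 2) (2 * m) (by simp) (fun _ => 1) measurable_const]
        simp_rw [mul_one]
        rw [lintegral_cut_rpow (by linarith) (by positivity), ← sphM, hσ',
          ENNReal.ofReal_mul (p := A * σ * σ) (by positivity),
          ENNReal.ofReal_mul (p := A * σ) (by positivity), ENNReal.ofReal_mul (p := A) hA0]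
        ring
    _ ≤ _ := by
        refine ENNReal.ofReal_le_ofReal ?_
        have he : exp (-‖v‖ ^ 2 / 4) ≤ exp (-‖v‖ ^ 2 / 6) := by
          exact Real.exp_le_exp.mpr (by linarith [sq_nonneg ‖v‖])
        rw [Real.mul_rpow (by norm_num) hm0.le, hA, hD, show 3 + γ = γ + 2 + 1 by ring]
        calc _ = Cb * ((2 * π)⁻¹ * exp 2) * σ * σ * (2 ^ (γ + 2 + 1) / (γ + 2 + 1)) *
              m ^ (γ + 2 + 1) * exp (-‖v‖ ^ 2 / 4) := by ring
          _ ≤ _ := by gcongr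

/-! ### Assembling the three terms -/

lemma integral_add_sub {X : Type*} [MeasurableSpace X] {ρ : Measure X} {f₀ f₁ f₂ : X → ℝ}
    (h₀ : Integrable f₀ ρ) (h₁ : Integrable f₁ ρ) (h₂ : Integrable f₂ ρ) :
    ∫ x, f₀ x ∂ρ + ∫ x, f₁ x ∂ρ - ∫ x, f₂ x ∂ρ = ∫ x, (f₀ x + f₁ x - f₂ x) ∂ρ := by
  have h := integral_sub (f := fun x => f₀ x + f₁ x) (h₀.add h₁) h₂
  rw [h, integral_add h₀ h₁]

lemma Kcut_eq {γ : ℝ} {b χ : ℝ → ℝ} {v : V3} {g : V3 → ℝ}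
    (h : ∀ i, Integrable (fun p => dens γ b χ v i p * g (slot v i p)) (volume.prod sphM)) :
    Kcut γ b χ g v = ∫ p, dens γ b χ v 0 p * g (slot v 0 p) ∂(volume.prod sphM) +
      ∫ p, dens γ b χ v 1 p * g (slot v 1 p) ∂(volume.prod sphM) -
      ∫ p, dens γ b χ v 2 p * g (slot v 2 p) ∂(volume.prod sphM) := by
  have hint : Integrable (fun p => dens γ b χ v 0 p * g (slot v 0 p) +
      dens γ b χ v 1 p * g (slot v 1 p) - dens γ b χ v 2 p * g (slot v 2 p))
      (volume.prod sphM) := ((h 0).add (h 1)).sub (h 2)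
  rw [integral_add_sub (h 0) (h 1) (h 2), integral_prod _ hint]
  unfold Kcut
  refine integral_congr_ae (.of_forall fun u => integral_congr_ae (.of_forall fun ω => ?_))
  simp only [dens, wt, slot]
  ring

lemma integrable_dens_mul {γ : ℝ} {b χ : ℝ → ℝ} {v : V3} {i : Fin 3}
    (hd : Integrable (dens γ b χ v i) (volume.prod sphM)) {g : V3 → ℝ} (hg : Measurable g)
    {M : ℝ} (hM : ∀ x, |g x| ≤ M) :
    Integrable (fun p => dens γ b χ v i p * g (slot v i p)) (volume.prod sphM) :=
  hd.mul_bdd (hg.comp (measurable_slot v i)).aestronglyMeasurable (.of_forall fun _ => hM _)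

/-- Smallness of the truncated part of `K` and kernel bound (Lemma 2.2). -/
theorem Km_smallness_and_kernel_bound (γ : ℝ) (hγ1 : -3 < γ) (hγ2 : γ ≤ 1)
    (b : ℝ → ℝ) (hb : KernelOK b) :
    ∃ C > (0 : ℝ), ∀ m : ℝ, m ∈ Set.Ioc (0 : ℝ) 1 → ∀ χ : ℝ → ℝ, IsCutoff m χ →
      (∀ g : V3 → ℝ, Measurable g → ∀ M : ℝ, (∀ v : V3, |g v| ≤ M) →
        ∀ v : V3, |Kcut γ b χ g v| ≤ C * m ^ (3 + γ) * Real.exp (-‖v‖ ^ 2 / 6) * M) ∧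
      ∃ k : V3 → V3 → ℝ,
        (∀ g : V3 → ℝ, Measurable g → (∃ M : ℝ, ∀ v : V3, |g v| ≤ M) →
          ∀ v : V3, Kcut γ b χ g v = ∫ η : V3, k v η * g η) ∧
        (∀ v η : V3, v ≠ η →
          |k v η| ≤ C * (‖v - η‖ ^ γ + ‖v - η‖ ^ (-(3 - γ) / 2)) *
            Real.exp (-(‖v‖ ^ 2 + ‖η‖ ^ 2) / 16)) := by
  obtain ⟨hbm, Cb, hb⟩ := hb
  obtain ⟨C₁, hC₁, hmass⟩ := dens_mass_le hγ1 hbm hb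
  obtain ⟨C₂, hC₂, hslot⟩ := dens_slot_le hγ1 hγ2 hbm hb
  refine ⟨3 * (C₁ + C₂) + 1, by positivity, fun m hm χ hχ => ?_⟩
  have hd0 : ∀ v i p, 0 ≤ dens γ b χ v i p := fun v i p =>
    dens_nonneg (fun s => (hb s).1) (fun s => (hχ.2.1 s).1) v i p
  have hdm : ∀ v i, Measurable (dens γ b χ v i) := fun v i =>
    measurable_dens hbm hχ.1.continuous.measurable v i
  have hmass' := hmass m hm.1 hm.2 χ hχ
  have hfin : ∀ v i, ∫⁻ p, ENNReal.ofReal (dens γ b χ v i p) ∂(volume.prod sphM) ≠ ⊤ :=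
    fun v i => ne_top_of_le_ne_top ENNReal.ofReal_ne_top (hmass' v i)
  have hdi : ∀ v i, Integrable (dens γ b χ v i) (volume.prod sphM) := fun v i =>
    (lintegral_ofReal_ne_top_iff_integrable (hdm v i).aestronglyMeasurable
      (.of_forall (hd0 v i))).mp (hfin v i)
  refine ⟨fun g hg M hM v => ?_, ?_⟩
  · have hM0 : 0 ≤ M := (abs_nonneg _).trans (hM 0)
    have hm0 := hm.1
    rw [Kcut_eq fun i => integrable_dens_mul (hdi v i) hg hM]
    have hterm : ∀ i, |∫ p, dens γ b χ v i p * g (slot v i p) ∂(volume.prod sphM)| ≤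
        C₁ * m ^ (3 + γ) * exp (-‖v‖ ^ 2 / 6) * M := by
      intro i
      have h1 : ∫ p, dens γ b χ v i p ∂(volume.prod sphM) ≤
          C₁ * m ^ (3 + γ) * exp (-‖v‖ ^ 2 / 6) := by
        rw [integral_eq_lintegral_of_nonneg_ae (.of_forall (hd0 v i))
          (hdm v i).aestronglyMeasurable]
        exact ENNReal.toReal_le_of_le_ofReal (by positivity) (hmass' v i)
      refine (norm_integral_le_of_norm_le (f := fun p => dens γ b χ v i p * g (slot v i p))
        ((hdi v i).mul_const M) (.of_forall fun p => ?_)).trans ?_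
      · rw [norm_mul, Real.norm_of_nonneg (hd0 v i p)]
        exact mul_le_mul_of_nonneg_left (hM _) (hd0 v i p)
      · rw [integral_mul_const]
        exact mul_le_mul_of_nonneg_right h1 hM0
    have h0 := abs_le.mp (hterm 0)
    have h1 := abs_le.mp (hterm 1)
    have h2 := abs_le.mp (hterm 2)
    have hX : 0 ≤ m ^ (3 + γ) * exp (-‖v‖ ^ 2 / 6) * M := by positivity
    have hle : 3 * (C₁ * m ^ (3 + γ) * exp (-‖v‖ ^ 2 / 6) * M) ≤
        (3 * (C₁ + C₂) + 1) * m ^ (3 + γ) * exp (-‖v‖ ^ 2 / 6) * M := by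
      nlinarith [mul_nonneg hC₂ hX]
    refine abs_le.mpr ⟨?_, ?_⟩ <;> linarith [h0.1, h0.2, h1.1, h1.2, h2.1, h2.2]
  · have hex := fun v i => exists_density (volume.prod sphM) (dens γ b χ v i) (hdm v i) (hd0 v i)
      (hfin v i) (slot v i) (measurable_slot v i) (maj γ C₂ v) (maj_nonneg hC₂ v)
      (hslot m hm.2 χ hχ v i)
    choose k hk hkg using hex
    refine ⟨fun v η => k v 0 η + k v 1 η - k v 2 η, fun g hg ⟨M, hM⟩ v => ?_, fun v η _ => ?_⟩
    · have H := fun i => hkg v i g hg ⟨M, hM⟩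
      rw [Kcut_eq fun i => integrable_dens_mul (hdi v i) hg hM, (H 0).2, (H 1).2, (H 2).2,
        integral_add_sub (H 0).1 (H 1).1 (H 2).1]
      refine integral_congr_ae (.of_forall fun η => ?_)
      simp only
      ring
    · have h0 := hk v 0 η
      have h1 := hk v 1 η
      have h2 := hk v 2 η
      have hX : 0 ≤ (‖v - η‖ ^ γ + ‖v - η‖ ^ (-(3 - γ) / 2)) *
          exp (-(‖v‖ ^ 2 + ‖η‖ ^ 2) / 16) := by positivity
      have hle : 3 * maj γ C₂ v η ≤ (3 * (C₁ + C₂) + 1) *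
          (‖v - η‖ ^ γ + ‖v - η‖ ^ (-(3 - γ) / 2)) * exp (-(‖v‖ ^ 2 + ‖η‖ ^ 2) / 16) := by
        unfold maj
        nlinarith [mul_nonneg hC₁ hX]
      refine abs_le.mpr ⟨?_, ?_⟩ <;> linarith [h0.1, h0.2, h1.1, h1.2, h2.1, h2.2]
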